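/- Let G be a pseudoforest on a nonempty vertex set with cycles(G) = κ(G). Then there exists a finite sequence of graphs G = G_0, G_1, …, G_k such that each G_{i+1} is obtained from G_i by a nontrivial 2-switch, every G_i is a pseudoforest, and G_k is unicyclic. -/

import Mathlib

/-!
A pseudoforest with as many cycles as components has exactly one cycle in every component.
Equivalently, it consists of a spanning forest `T` with the same connectivity, together with
exactly one additional edge in each component; this description is `HasTransversal` below.

If `T` is not connected, take the additional edges `ab` and `cd` of two different components and
perform the switch `(a b / c d)`. The result is described in the same way by the forest
`T + ac` (still acyclic, since `a` and `c` lie in different components of `T`) with `bd` as the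
additional edge of the merged component; the other additional edges are untouched
(`HasTransversal.switch`). As the forest strictly grows, the process stops, and it stops at a
connected graph.

The link with cycle subgraphs is as follows. Every cycle subgraph is the trace of a cycle walk
(`IsCycleSubgraph.exists_walk`). A cycle cannot lie in `T`, hence it passes through the
additional edge `xy` of its component, and the rest of it is a path of `T` from `y` to `x`, which
is unique. So each component has at most one cycle (`HasTransversal.pseudoforest`). Conversely,
`xy` and the `T`-path joining its ends form a cycle, so in a pseudoforest two distinct additional
edges never share a component (`exists_hasTransversal`).
-/


open SimpleGraph

variable {V : Type*}

/-- The 2-switch (a b / c d): delete the edges ab, cd and add the edges ac, bd. -/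
def twoSwitch (G : SimpleGraph V) (a b c d : V) : SimpleGraph V :=
  (G.deleteEdges {s(a, b), s(c, d)}) ⊔ SimpleGraph.fromEdgeSet {s(a, c), s(b, d)}

/-- τ = (a b / c d) is a nontrivial 2-switch on `G`: the four vertices are distinct,
`ab, cd ∈ E(G)` and `ac, bd ∉ E(G)`. -/
def IsNontrivialSwitch (G : SimpleGraph V) (a b c d : V) : Prop :=
  [a, b, c, d].Nodup ∧ G.Adj a b ∧ G.Adj c d ∧ ¬ G.Adj a c ∧ ¬ G.Adj b d

/-- A cycle subgraph: a subgraph isomorphic to a cycle graph, i.e. a subgraph that is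
connected and 2-regular (every vertex of the subgraph has exactly two neighbours in it). -/
def IsCycleSubgraph (G : SimpleGraph V) (H : G.Subgraph) : Prop :=
  H.coe.Connected ∧ ∀ v ∈ H.verts, (H.neighborSet v).ncard = 2

/-- A graph is unicyclic if it is connected and contains exactly one cycle subgraph. -/
def Unicyclic (G : SimpleGraph V) : Prop :=
  G.Connected ∧ ∃! H : G.Subgraph, IsCycleSubgraph G H

/-- `Cycles(G)`: the subgraph formed by all vertices and edges of `G` lying on some cycle. -/
def cyclesSub (G : SimpleGraph V) : G.Subgraph :=
  sSup {H | IsCycleSubgraph G H}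

/-- `Forest(G) := G − E(Cycles(G))`. -/
def forestPart (G : SimpleGraph V) : SimpleGraph V :=
  G.deleteEdges (cyclesSub G).edgeSet

/-- A pseudoforest: every connected component contains at most one cycle subgraph, i.e. any
two cycle subgraphs lying in the same connected component coincide. -/
def Pseudoforest (G : SimpleGraph V) : Prop :=
  ∀ H₁ H₂ : G.Subgraph, IsCycleSubgraph G H₁ → IsCycleSubgraph G H₂ →
    (∃ u ∈ H₁.verts, ∃ v ∈ H₂.verts, G.Reachable u v) → H₁ = H₂

/-- `cycles(G)`: the number of cycle subgraphs of `G`. -/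
noncomputable def numCycles (G : SimpleGraph V) : ℕ :=
  {H : G.Subgraph | IsCycleSubgraph G H}.ncard

/-- `κ(G)`: the number of connected components of `G`. -/
noncomputable def numComponents (G : SimpleGraph V) : ℕ :=
  Nat.card G.ConnectedComponent

/-- `G'` is obtained from `G` by a nontrivial 2-switch. -/
def SwitchStep (G G' : SimpleGraph V) : Prop :=
  ∃ a b c d : V, IsNontrivialSwitch G a b c d ∧ G' = twoSwitch G a b c d

/-- A cycle graph: a connected 2-regular graph. -/
def IsCycleGraph (G : SimpleGraph V) : Prop :=
  G.Connected ∧ ∀ v : V, (G.neighborSet v).ncard = 2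

/-- `ℓ` is a leaf shared by `G` and `H`: it has degree one in both and its unique incident
edge is common to both graphs. -/
def SharedLeaf (G H : SimpleGraph V) : Prop :=
  ∃ ℓ v : V, (G.neighborSet ℓ).ncard = 1 ∧ (H.neighborSet ℓ).ncard = 1 ∧
    G.Adj ℓ v ∧ H.Adj ℓ v

/-! ### Cycle subgraphs and cycle walks -/

lemma isCycleSubgraph_toSubgraph {G : SimpleGraph V} {v : V} {c : G.Walk v v} (hc : c.IsCycle) :
    IsCycleSubgraph G c.toSubgraph := by
  refine ⟨c.toSubgraph_connected.coe, fun w hw => ?_⟩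
  exact hc.ncard_neighborSet_toSubgraph_eq_two (by simpa using hw)

lemma IsCycleSubgraph.exists_walk [Finite V] {G : SimpleGraph V} {H : G.Subgraph}
    (hH : IsCycleSubgraph G H) :
    ∃ (v : V) (c : G.Walk v v), c.IsCycle ∧ c.toSubgraph = H := by
  classical
  have := Fintype.ofFinite V
  obtain ⟨hconn, hdeg⟩ := hH
  obtain ⟨⟨v, hv⟩⟩ := hconn.nonempty
  have hle : H.spanningCoe ≤ G := H.spanningCoe_le
  have hcyc : H.spanningCoe.IsCycles := by
    rintro u ⟨w, hw⟩
    exact hdeg u (H.edge_vert hw)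
  have hne : (H.spanningCoe.neighborSet v).Nonempty :=
    Set.nonempty_of_ncard_ne_zero (by
      have : (H.spanningCoe.neighborSet v).ncard = 2 := hdeg v hv
      omega)
  obtain ⟨p, hp, hpv⟩ := hcyc.exists_cycle_toSubgraph_verts_eq_connectedComponentSupp
    (c := H.spanningCoe.connectedComponentMk v) rfl hne
  -- `H` is connected, so the cycle walk visits all of `H`
  have hall : ∀ u ∈ H.verts, u ∈ p.support := by
    intro u hu
    have h1 : H.spanningCoe.Reachable u v :=
      (hconn.preconnected ⟨u, hu⟩ ⟨v, hv⟩).map H.coeEmbeddingSpanningCoe.toHom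
    have h2 : u ∈ p.toSubgraph.verts := by
      rw [hpv]
      exact SimpleGraph.ConnectedComponent.sound h1
    simpa using h2
  have hadj : ∀ u w, p.toSubgraph.Adj u w ↔ H.Adj u w := by
    intro u w
    constructor
    · intro h
      exact h.adj_sub
    · intro h
      have hu : u ∈ p.toSubgraph.verts := by simpa using hall u (H.edge_vert h)
      exact (hp.adj_toSubgraph_iff_of_isCycles hcyc hu w).2 h
  refine ⟨v, p.mapLe hle, hp.mapLe hle, ?_⟩
  apply SimpleGraph.Subgraph.ext
  · ext u
    simp only [SimpleGraph.Walk.mem_verts_toSubgraph, SimpleGraph.Walk.support_mapLe_eq_support]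
    refine ⟨fun hu => ?_, hall u⟩
    have h2 := hp.ncard_neighborSet_toSubgraph_eq_two hu
    obtain ⟨w, hw⟩ := Set.nonempty_of_ncard_ne_zero (s := p.toSubgraph.neighborSet u) (by omega)
    exact H.edge_vert ((hadj u w).1 hw)
  · ext u w
    rw [SimpleGraph.Walk.adj_toSubgraph_mapLe, hadj]

/-- A cycle through the edge `xy` can be traversed starting with the step from `x` to `y`. -/
lemma exists_cons_of_mem_edges {G : SimpleGraph V} {v x y : V} {c : G.Walk v v} (hc : c.IsCycle)
    (he : s(x, y) ∈ c.edges) :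
    ∃ (h : G.Adj x y) (p : G.Walk y x), p.IsPath ∧ s(x, y) ∉ p.edges ∧
      (SimpleGraph.Walk.cons h p).toSubgraph = c.toSubgraph := by
  classical
  have key : ∀ d : G.Walk x x, d.IsCycle → d.toSubgraph = c.toSubgraph → d.snd = y →
      ∃ (h : G.Adj x y) (p : G.Walk y x), p.IsPath ∧ s(x, y) ∉ p.edges ∧
      (SimpleGraph.Walk.cons h p).toSubgraph = c.toSubgraph := by
    intro d hd hdc hy
    cases d with
    | nil => exact absurd hd (by simp)
    | cons h p =>
      simp only [SimpleGraph.Walk.snd_cons] at hy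
      subst hy
      obtain ⟨h1, h2⟩ := (SimpleGraph.Walk.cons_isCycle_iff p h).1 hd
      exact ⟨h, p, h1, h2, hdc⟩
  have hx : x ∈ c.support := c.fst_mem_support_of_mem_edges he
  have hd : (c.rotate x hx).IsCycle := by simpa using hc
  have hdc : (c.rotate x hx).toSubgraph = c.toSubgraph := c.toSubgraph_rotate hx
  have hy : y ∈ (c.rotate x hx).toSubgraph.neighborSet x := by
    rw [hdc]
    exact SimpleGraph.Walk.adj_toSubgraph_iff_mem_edges.2 he
  rw [hd.neighborSet_toSubgraph_endpoint] at hy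
  rcases hy with hy | hy
  · exact key _ hd hdc hy.symm
  · refine key (c.rotate x hx).reverse hd.reverse ?_ ?_
    · rw [SimpleGraph.Walk.toSubgraph_reverse, hdc]
    · rw [SimpleGraph.Walk.snd_reverse]
      exact hy.symm

/-- An edge outside a subgraph `T` joining two vertices connected in `T` closes a cycle whose
other edges all belong to `T`. -/
lemma exists_cycle_through {G T : SimpleGraph V} (hle : T ≤ G) {x y : V} (hG : G.Adj x y)
    (hT : ¬ T.Adj x y) (hr : T.Reachable x y) :
    ∃ c : G.Walk x x, c.IsCycle ∧ s(x, y) ∈ c.edges ∧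
      ∀ u v, s(u, v) ∈ c.edges → s(u, v) = s(x, y) ∨ T.Adj u v := by
  obtain ⟨q, hq⟩ := hr.symm.exists_isPath
  have hmem : ∀ u v, s(u, v) ∈ (q.mapLe hle).edges → T.Adj u v := by
    intro u v h
    rw [SimpleGraph.Walk.edges_mapLe_eq_edges] at h
    exact q.adj_of_mem_edges h
  refine ⟨SimpleGraph.Walk.cons hG (q.mapLe hle), ?_, by simp, ?_⟩
  · rw [SimpleGraph.Walk.cons_isCycle_iff]
    exact ⟨hq.mapLe hle, fun h => hT (hmem _ _ h)⟩
  · intro u v h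
    rw [SimpleGraph.Walk.edges_cons, List.mem_cons] at h
    exact h.imp id (hmem u v)

/-! ### Spanning forests with one additional edge per component -/

/-- `T` is a spanning forest of `G` with the same connectivity, and the edges of `G` outside `T`
form a transversal of the components: each component contains exactly one of them. -/
structure HasTransversal (G T : SimpleGraph V) : Prop where
  le : T ≤ G
  acyclic : T.IsAcyclic
  reach : ∀ u v, G.Adj u v → T.Reachable u v
  exists_edge : ∀ v, ∃ x y, G.Adj x y ∧ ¬ T.Adj x y ∧ T.Reachable v x
  unique_edge : ∀ x y x' y', G.Adj x y → ¬ T.Adj x y → G.Adj x' y' → ¬ T.Adj x' y' →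
    T.Reachable x x' → s(x, y) = s(x', y')

lemma HasTransversal.reachable {G T : SimpleGraph V} (h : HasTransversal G T) {u v : V}
    (huv : G.Reachable u v) : T.Reachable u v := by
  obtain ⟨p⟩ := huv
  induction p with
  | nil => exact SimpleGraph.Reachable.refl _
  | cons hadj _ ih => exact (h.reach _ _ hadj).trans ih

/-- If `xy` is the additional edge of the component containing the cycle `H`, then `H` consists of
`xy` and a path of the forest from `y` to `x`. -/
lemma HasTransversal.cycle_eq [Finite V] {G T : SimpleGraph V} (h : HasTransversal G T)
    {H : G.Subgraph} (hH : IsCycleSubgraph G H) {u x y : V} (hu : u ∈ H.verts)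
    (hxy : G.Adj x y) (hT : ¬ T.Adj x y) (hux : G.Reachable u x) :
    ∃ q : T.Path y x, H = (SimpleGraph.Walk.cons hxy (q.1.mapLe h.le)).toSubgraph := by
  obtain ⟨v, c, hc, rfl⟩ := hH.exists_walk
  have hu : u ∈ c.support := by simpa using hu
  -- every edge of the cycle is `xy` or belongs to the forest
  have hedge : ∀ a b, s(a, b) ∈ c.edges → s(a, b) = s(x, y) ∨ T.Adj a b := by
    intro a b hab
    by_contra! hcon
    have ha : a ∈ c.support := c.fst_mem_support_of_mem_edges hab
    have hau : G.Reachable a u := by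
      classical
      exact (SimpleGraph.Walk.reachable (c.takeUntil a ha)).symm.trans
        (SimpleGraph.Walk.reachable (c.takeUntil u hu))
    exact hcon.1 (h.unique_edge a b x y (c.adj_of_mem_edges hab) hcon.2 hxy hT
      (h.reachable (hau.trans hux)))
  have hmem : s(x, y) ∈ c.edges := by
    by_contra hcon
    have hall : ∀ e ∈ c.edges, e ∈ T.edgeSet := by
      intro e
      induction e with
      | _ a b =>
        intro he
        rcases hedge a b he with h1 | h1
        · exact absurd (h1 ▸ he) hcon
        · exact h1
    exact h.acyclic (c.transfer T hall) (hc.transfer hall)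
  obtain ⟨hadj, p, hp, hnot, heq⟩ := exists_cons_of_mem_edges hc hmem
  have hall : ∀ e ∈ p.edges, e ∈ T.edgeSet := by
    intro e
    induction e with
    | _ a b =>
      intro he
      have h0 : s(a, b) ∈ c.edges := by
        rw [← SimpleGraph.Walk.mem_edges_toSubgraph, ← heq,
          SimpleGraph.Walk.mem_edges_toSubgraph, SimpleGraph.Walk.edges_cons]
        exact List.mem_cons_of_mem _ he
      rcases hedge a b h0 with h1 | h1
      · exact absurd (h1 ▸ he) hnot
      · exact h1
  refine ⟨⟨p.transfer T hall, hp.transfer hall⟩, ?_⟩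
  rw [← heq]
  have : (p.transfer T hall).mapLe h.le = p := by
    rw [SimpleGraph.Walk.mapLe, ← SimpleGraph.Walk.transfer_eq_map_ofLE _
      (fun e he => SimpleGraph.edgeSet_mono h.le
        ((p.transfer T hall).edges_subset_edgeSet he)), SimpleGraph.Walk.transfer_transfer,
      SimpleGraph.Walk.transfer_self]
  simp only [this]

lemma HasTransversal.pseudoforest [Finite V] {G T : SimpleGraph V} (h : HasTransversal G T) :
    Pseudoforest G := by
  rintro H₁ H₂ hH₁ hH₂ ⟨u, hu, v, hv, huv⟩
  obtain ⟨x, y, hxy, hT, hux⟩ := h.exists_edge u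
  have hux' : G.Reachable u x := hux.mono h.le
  obtain ⟨q₁, h₁⟩ := h.cycle_eq hH₁ hu hxy hT hux'
  obtain ⟨q₂, h₂⟩ := h.cycle_eq hH₂ hv hxy hT (huv.symm.trans hux')
  rw [h₁, h₂, (h.acyclic.subsingleton_path y x).elim q₁ q₂]

lemma HasTransversal.unicyclic [Finite V] [Nonempty V] {G T : SimpleGraph V}
    (h : HasTransversal G T) (hT : T.Preconnected) : Unicyclic G := by
  have hconn : G.Connected := ⟨fun u v => (hT u v).mono h.le⟩
  obtain ⟨x, y, hxy, hxyT, -⟩ := h.exists_edge (Classical.arbitrary V)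
  obtain ⟨c, hc, -⟩ := exists_cycle_through h.le hxy hxyT (h.reach _ _ hxy)
  refine ⟨hconn, c.toSubgraph, isCycleSubgraph_toSubgraph hc, fun H hH => ?_⟩
  obtain ⟨⟨u, hu⟩⟩ := hH.1.nonempty
  exact h.pseudoforest _ _ hH (isCycleSubgraph_toSubgraph hc)
    ⟨u, hu, x, by simp, hconn.preconnected u x⟩

/-! ### The initial graph -/

/-- Distinct components contain distinct cycles and the two numbers agree, so every component
contains a cycle. -/
lemma exists_cycle_of_numCycles_eq [Finite V] {G : SimpleGraph V} (hG : Pseudoforest G)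
    (hGc : numCycles G = numComponents G) (v : V) :
    ∃ H : G.Subgraph, IsCycleSubgraph G H ∧ ∃ u ∈ H.verts, G.Reachable v u := by
  have hne : ∀ H : {H : G.Subgraph | IsCycleSubgraph G H}, ∃ u, u ∈ H.1.verts := by
    rintro ⟨H, hH⟩
    obtain ⟨⟨u, hu⟩⟩ := hH.1.nonempty
    exact ⟨u, hu⟩
  choose f hf using hne
  have hinj : Function.Injective
      (fun H : {H : G.Subgraph | IsCycleSubgraph G H} => G.connectedComponentMk (f H)) := by
    intro H₁ H₂ h
    exact Subtype.ext (hG _ _ H₁.2 H₂.2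
      ⟨f H₁, hf H₁, f H₂, hf H₂, SimpleGraph.ConnectedComponent.exact h⟩)
  have hcard : Nat.card G.ConnectedComponent ≤
      Nat.card {H : G.Subgraph | IsCycleSubgraph G H} := by
    rw [Nat.card_coe_set_eq]
    exact hGc.ge
  have hbij := hinj.bijective_of_nat_card_le hcard
  obtain ⟨H, hH⟩ := hbij.2 (G.connectedComponentMk v)
  exact ⟨H.1, H.2, f H, hf H, (SimpleGraph.ConnectedComponent.exact hH).symm⟩

lemma exists_hasTransversal [Finite V] {G : SimpleGraph V} (hG : Pseudoforest G)
    (hGc : numCycles G = numComponents G) : ∃ T, HasTransversal G T := by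
  obtain ⟨T, hle, hac, hreach⟩ := G.exists_isAcyclic_reachable_eq_le
  refine ⟨T, hle, hac, fun u v h => ?_, fun v => ?_, ?_⟩
  · rw [hreach]
    exact h.reachable
  · obtain ⟨H, hH, u, hu, hvu⟩ := exists_cycle_of_numCycles_eq hG hGc v
    obtain ⟨w, c, hc, rfl⟩ := hH.exists_walk
    by_contra! hcon
    have hu : u ∈ c.support := by simpa using hu
    refine hac (c.transfer T ?_) (hc.transfer ?_) <;>
    · intro e
      induction e with
      | _ a b =>
        intro he
        by_contra hab
        refine hcon a b (c.adj_of_mem_edges he) hab ?_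
        rw [hreach]
        classical
        have ha : a ∈ c.support := c.fst_mem_support_of_mem_edges he
        exact hvu.trans ((SimpleGraph.Walk.reachable (c.takeUntil u hu)).symm.trans
          (SimpleGraph.Walk.reachable (c.takeUntil a ha)))
  · intro x y x' y' hxy hT hxy' hT' hr
    have hr1 : T.Reachable x y := by rw [hreach]; exact hxy.reachable
    have hr2 : T.Reachable x' y' := by rw [hreach]; exact hxy'.reachable
    obtain ⟨c, hc, hmem, -⟩ := exists_cycle_through hle hxy hT hr1
    obtain ⟨c', hc', -, hother⟩ := exists_cycle_through hle hxy' hT' hr2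
    have heq := hG _ _ (isCycleSubgraph_toSubgraph hc) (isCycleSubgraph_toSubgraph hc')
      ⟨x, by simp, x', by simp, hr.mono hle⟩
    -- `xy` lies on the cycle closed by the second edge, whose other edges are forest edges
    have hmem' : s(x, y) ∈ c'.edges := by
      rw [← SimpleGraph.Walk.mem_edges_toSubgraph, ← heq, SimpleGraph.Walk.mem_edges_toSubgraph]
      exact hmem
    exact (hother x y hmem').resolve_right hT

/-! ### The switch -/

lemma reachable_sup_edge {T : SimpleGraph V} {a c u v : V}
    (h : (T ⊔ SimpleGraph.edge a c).Reachable u v) :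
    T.Reachable u v ∨ ((T.Reachable u a ∨ T.Reachable u c) ∧
      (T.Reachable v a ∨ T.Reachable v c)) := by
  obtain ⟨p⟩ := h
  induction p with
  | nil => exact Or.inl (SimpleGraph.Reachable.refl _)
  | @cons u w v hadj _ ih =>
    rw [SimpleGraph.sup_adj, SimpleGraph.edge_adj] at hadj
    rcases hadj with hadj | ⟨⟨rfl, rfl⟩ | ⟨rfl, rfl⟩, -⟩
    · have huw := hadj.reachable
      rcases ih with ih | ⟨ih | ih, ih'⟩
      · exact Or.inl (huw.trans ih)
      · exact Or.inr ⟨Or.inl (huw.trans ih), ih'⟩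
      · exact Or.inr ⟨Or.inr (huw.trans ih), ih'⟩
    · rcases ih with ih | ⟨-, ih⟩
      · exact Or.inr ⟨Or.inl (SimpleGraph.Reachable.refl _), Or.inr ih.symm⟩
      · exact Or.inr ⟨Or.inl (SimpleGraph.Reachable.refl _), ih⟩
    · rcases ih with ih | ⟨-, ih⟩
      · exact Or.inr ⟨Or.inr (SimpleGraph.Reachable.refl _), Or.inl ih.symm⟩
      · exact Or.inr ⟨Or.inr (SimpleGraph.Reachable.refl _), ih⟩

lemma twoSwitch_adj {G : SimpleGraph V} {a b c d x y : V} :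
    (twoSwitch G a b c d).Adj x y ↔
      (G.Adj x y ∧ s(x, y) ≠ s(a, b) ∧ s(x, y) ≠ s(c, d)) ∨
      ((s(x, y) = s(a, c) ∨ s(x, y) = s(b, d)) ∧ x ≠ y) := by
  simp only [twoSwitch, SimpleGraph.sup_adj, SimpleGraph.deleteEdges_adj,
    SimpleGraph.fromEdgeSet_adj, Set.mem_insert_iff, Set.mem_singleton_iff, not_or, ne_eq]

section Switch

variable {G T : SimpleGraph V} {a b c d : V}

lemma HasTransversal.isNontrivialSwitch (h : HasTransversal G T)
    (hab : G.Adj a b) (hcd : G.Adj c d) (hac : ¬ T.Reachable a c) :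
    IsNontrivialSwitch G a b c d := by
  have rab := h.reach _ _ hab
  have rcd := h.reach _ _ hcd
  have hbd : ¬ T.Reachable b d := fun hr => hac (rab.trans (hr.trans rcd.symm))
  refine ⟨?_, hab, hcd, fun hr => hac (h.reach _ _ hr), fun hr => hbd (h.reach _ _ hr)⟩
  have h1 : a ≠ c := by rintro rfl; exact hac (SimpleGraph.Reachable.refl _)
  have h2 : a ≠ d := by rintro rfl; exact hac rcd.symm
  have h3 : b ≠ c := by rintro rfl; exact hac rab
  have h4 : b ≠ d := by rintro rfl; exact hbd (SimpleGraph.Reachable.refl _)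
  simp [hab.ne, hcd.ne, h1, h2, h3, h4]

/-- Switching the additional edges `ab`, `cd` of two components turns `ac` into a forest edge and
`bd` into the additional edge of the merged component. -/
lemma HasTransversal.switch (h : HasTransversal G T)
    (hab : G.Adj a b) (habT : ¬ T.Adj a b) (hcd : G.Adj c d) (hcdT : ¬ T.Adj c d)
    (hac : ¬ T.Reachable a c) :
    HasTransversal (twoSwitch G a b c d) (T ⊔ SimpleGraph.edge a c) := by
  have rab := h.reach _ _ hab
  have rcd := h.reach _ _ hcd
  have hbd : ¬ T.Reachable b d := fun hr => hac (rab.trans (hr.trans rcd.symm))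
  have hneac : a ≠ c := by rintro rfl; exact hac (SimpleGraph.Reachable.refl _)
  have hnebd : b ≠ d := by rintro rfl; exact hbd (SimpleGraph.Reachable.refl _)
  have had : a ≠ d := by rintro rfl; exact hac rcd.symm
  have hleT : T ≤ T ⊔ SimpleGraph.edge a c := le_sup_left
  have hTab : ∀ x y, T.Adj x y → s(x, y) ≠ s(a, b) := by
    intro x y hxy he
    rw [← SimpleGraph.mem_edgeSet, he] at hxy
    exact habT hxy
  have hTcd : ∀ x y, T.Adj x y → s(x, y) ≠ s(c, d) := by
    intro x y hxy he
    rw [← SimpleGraph.mem_edgeSet, he] at hxy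
    exact hcdT hxy
  have hT' : ∀ x y, (T ⊔ SimpleGraph.edge a c).Adj x y ↔
      T.Adj x y ∨ (s(x, y) = s(a, c) ∧ x ≠ y) := by
    intro x y
    rw [SimpleGraph.sup_adj, SimpleGraph.edge, SimpleGraph.fromEdgeSet_adj,
      Set.mem_singleton_iff]
  have hacT' : (T ⊔ SimpleGraph.edge a c).Reachable a c :=
    ((hT' a c).2 (Or.inr ⟨rfl, hneac⟩)).reachable
  have hbdT' : (T ⊔ SimpleGraph.edge a c).Reachable b d :=
    (rab.symm.mono hleT).trans (hacT'.trans (rcd.mono hleT))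
  have hbdne : s(b, d) ≠ s(a, c) := by
    intro he
    rcases Sym2.eq_iff.1 he with ⟨rfl, -⟩ | ⟨-, rfl⟩
    · exact hab.ne rfl
    · exact had rfl
  have hbdnadj : ¬ (T ⊔ SimpleGraph.edge a c).Adj b d := by
    rw [hT']
    rintro (h1 | ⟨h1, -⟩)
    · exact hbd h1.reachable
    · exact hbdne h1
  have hbdG : (twoSwitch G a b c d).Adj b d := twoSwitch_adj.2 (Or.inr ⟨Or.inr rfl, hnebd⟩)
  -- the additional edges after the switch: `bd`, and the old ones of all other components
  have hclass : ∀ x y, (twoSwitch G a b c d).Adj x y → ¬ (T ⊔ SimpleGraph.edge a c).Adj x y →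
      s(x, y) = s(b, d) ∨
        (G.Adj x y ∧ ¬ T.Adj x y ∧ ¬ T.Reachable x a ∧ ¬ T.Reachable x c) := by
    intro x y hxy hn
    rw [hT', not_or] at hn
    rcases twoSwitch_adj.1 hxy with ⟨h1, h2, h3⟩ | ⟨h1 | h1, h2⟩
    · exact Or.inr ⟨h1, hn.1,
        fun hr => h2 (h.unique_edge _ _ _ _ h1 hn.1 hab habT hr),
        fun hr => h3 (h.unique_edge _ _ _ _ h1 hn.1 hcd hcdT hr)⟩
    · exact absurd ⟨h1, h2⟩ hn.2
    · exact Or.inl h1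
  have hend : ∀ x y, s(x, y) = s(b, d) → T.Reachable x a ∨ T.Reachable x c := by
    intro x y he
    rcases Sym2.eq_iff.1 he with ⟨rfl, -⟩ | ⟨rfl, -⟩
    · exact Or.inl rab.symm
    · exact Or.inr rcd.symm
  refine ⟨?_, h.acyclic.sup_edge_of_not_reachable hac, ?_, ?_, ?_⟩
  · intro x y hxy
    rcases (hT' x y).1 hxy with h1 | h1
    · exact twoSwitch_adj.2 (Or.inl ⟨h.le h1, hTab _ _ h1, hTcd _ _ h1⟩)
    · exact twoSwitch_adj.2 (Or.inr ⟨Or.inl h1.1, h1.2⟩)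
  · intro x y hxy
    rcases twoSwitch_adj.1 hxy with ⟨h1, -⟩ | ⟨h1 | h1, -⟩
    · exact (h.reach _ _ h1).mono hleT
    · rcases Sym2.eq_iff.1 h1 with ⟨rfl, rfl⟩ | ⟨rfl, rfl⟩
      · exact hacT'
      · exact hacT'.symm
    · rcases Sym2.eq_iff.1 h1 with ⟨rfl, rfl⟩ | ⟨rfl, rfl⟩
      · exact hbdT'
      · exact hbdT'.symm
  · intro v
    by_cases hva : T.Reachable v a
    · exact ⟨b, d, hbdG, hbdnadj, (hva.trans rab).mono hleT⟩
    by_cases hvc : T.Reachable v c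
    · exact ⟨d, b, hbdG.symm, fun hr => hbdnadj hr.symm, (hvc.trans rcd).mono hleT⟩
    obtain ⟨x, y, hxy, hxyT, hvx⟩ := h.exists_edge v
    have hxa : ¬ T.Reachable x a := fun hr => hva (hvx.trans hr)
    have hxc : ¬ T.Reachable x c := fun hr => hvc (hvx.trans hr)
    refine ⟨x, y, twoSwitch_adj.2 (Or.inl ⟨hxy, ?_, ?_⟩), ?_, hvx.mono hleT⟩
    · intro he
      rcases Sym2.eq_iff.1 he with ⟨rfl, -⟩ | ⟨rfl, -⟩
      · exact hxa (SimpleGraph.Reachable.refl _)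
      · exact hxa rab.symm
    · intro he
      rcases Sym2.eq_iff.1 he with ⟨rfl, -⟩ | ⟨rfl, -⟩
      · exact hxc (SimpleGraph.Reachable.refl _)
      · exact hxc rcd.symm
    · rw [hT']
      rintro (h1 | ⟨h1, -⟩)
      · exact hxyT h1
      · rcases Sym2.eq_iff.1 h1 with ⟨rfl, -⟩ | ⟨rfl, -⟩
        · exact hxa (SimpleGraph.Reachable.refl _)
        · exact hxc (SimpleGraph.Reachable.refl _)
  · intro x y x' y' hxy hn hxy' hn' hr
    have hr' := reachable_sup_edge hr
    rcases hclass x y hxy hn with h1 | ⟨h1, h2, h3, h4⟩ <;>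
      rcases hclass x' y' hxy' hn' with h1' | ⟨h1', h2', h3', h4'⟩
    · rw [h1, h1']
    · exfalso
      rcases hr' with hr' | ⟨-, hr'⟩
      · exact (hend x y h1).elim (fun hx => h3' (hr'.symm.trans hx))
          (fun hx => h4' (hr'.symm.trans hx))
      · exact hr'.elim h3' h4'
    · exfalso
      rcases hr' with hr' | ⟨hr', -⟩
      · exact (hend x' y' h1').elim (fun hx => h3 (hr'.trans hx)) (fun hx => h4 (hr'.trans hx))
      · exact hr'.elim h3 h4
    · rcases hr' with hr' | ⟨hr', -⟩
      · exact h.unique_edge _ _ _ _ h1 h2 h1' h2' hr'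
      · exact (hr'.elim h3 h4).elim

end Switch

lemma HasTransversal.exists_unicyclic [Finite V] [Nonempty V] (T : SimpleGraph V) :
    ∀ G : SimpleGraph V, HasTransversal G T → ∃ G' : SimpleGraph V,
      Relation.ReflTransGen (fun X Y : SimpleGraph V => SwitchStep X Y ∧ Pseudoforest Y) G G' ∧
      Unicyclic G' := by
  induction T using WellFoundedGT.induction with
  | ind T ih =>
    intro G h
    by_cases hT : T.Preconnected
    · exact ⟨G, Relation.ReflTransGen.refl, h.unicyclic hT⟩
    obtain ⟨u, v, huv⟩ : ∃ u v, ¬ T.Reachable u v := by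
      by_contra! hcon
      exact hT hcon
    obtain ⟨a, b, hab, habT, hua⟩ := h.exists_edge u
    obtain ⟨c, d, hcd, hcdT, hvc⟩ := h.exists_edge v
    have hac : ¬ T.Reachable a c := fun hr => huv (hua.trans (hr.trans hvc.symm))
    have hneac : a ≠ c := by rintro rfl; exact hac (SimpleGraph.Reachable.refl _)
    have h' := h.switch hab habT hcd hcdT hac
    obtain ⟨G', hsteps, hfinal⟩ := ih _
      (SimpleGraph.lt_sup_edge T a c hneac (fun hr => hac hr.reachable)) _ h'
    exact ⟨G', Relation.ReflTransGen.head
      ⟨⟨a, b, c, d, h.isNontrivialSwitch hab hcd hac, rfl⟩, h'.pseudoforest⟩ hsteps, hfinal⟩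

/-- every pseudoforest G (on a nonempty vertex set) with cycles(G) = κ(G) can
be transformed into a unicyclic graph by a finite sequence of nontrivial 2-switches all of
whose intermediate graphs are pseudoforests. -/
theorem stmt18 {V : Type*} [Fintype V] [Nonempty V] (G : SimpleGraph V)
    (hG : Pseudoforest G) (hGc : numCycles G = numComponents G) :
    ∃ G' : SimpleGraph V,
      Relation.ReflTransGen (fun X Y : SimpleGraph V => SwitchStep X Y ∧ Pseudoforest Y) G G' ∧
      Unicyclic G' := by
  obtain ⟨T, hT⟩ := exists_hasTransversal hG hGc
  exact HasTransversal.exists_unicyclic T G hT
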